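/- arXiv:1909.12691 — 3 statements merged into one kernel-verified Lean document; each statement's English description precedes it below -/
import Mathlib

section
/- Let A and B be finite sets, let P_A and P'_A be probability mass functions on A, and let k, k' : A → (pmf on B) be two channels. Suppose the joint distributions P(a,b) := P_A(a) k(b|a) and P'(a,b) := P'_A(a) k'(b|a) satisfy ‖P − P'‖₁ = ε. Then there exists a ∈ A such that ‖k(·|a) − k'(·|a)‖₁ ≤ 2ε, i.e., Σ_{b∈B} |k(b|a) − k'(b|a)| ≤ 2ε. -/
/-!
For each `a`, splitting `p (u - v) = (p u - q v) - (p - q) v` with `p = P_A(a)`, `q = P'_A(a)`,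
`u = k(·|a)`, `v = k'(·|a)` bounds `p ‖u - v‖₁` by `‖p u - q v‖₁ + |p - q|`, and `|p - q|` is
itself at most `‖p u - q v‖₁`, because it is the total mass of `p u - q v` up to sign. Summing over
`a`, the `P_A`-average of `‖k(·|a) - k'(·|a)‖₁` is at most `2ε`, so some `a` does not exceed it.
-/

section ScaledL1

variable {B : Type*} {u v : B → ℝ} {m : ℝ}

theorem abs_sub_mul_le_tsum_abs_mul_sub_mul (hu : HasSum u m) (hv : HasSum v m) (p q : ℝ) :
    |(p - q) * m| ≤ ∑' b, |p * u b - q * v b| := by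
  have hsum : HasSum (fun b => p * u b - q * v b) ((p - q) * m) := by
    simpa only [sub_mul] using (hu.mul_left p).sub (hv.mul_left q)
  rw [← hsum.tsum_eq]
  exact norm_tsum_le_tsum_norm hsum.summable.norm

theorem abs_mul_tsum_abs_sub_le (hu : HasSum u m) (hv : HasSum v m) (hv0 : ∀ b, 0 ≤ v b)
    (p q : ℝ) :
    |p| * ∑' b, |u b - v b| ≤ 2 * ∑' b, |p * u b - q * v b| := by
  have hsplit (b : B) : |p| * |u b - v b| ≤ |p * u b - q * v b| + |p - q| * v b :=
    calc |p| * |u b - v b| = |(p * u b - q * v b) - (p - q) * v b| := by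
          rw [← abs_mul]; ring_nf
      _ ≤ |p * u b - q * v b| + |(p - q) * v b| := abs_sub _ _
      _ = |p * u b - q * v b| + |p - q| * v b := by rw [abs_mul, abs_of_nonneg (hv0 b)]
  have hdiff : HasSum (fun b => |p| * |u b - v b|) (|p| * ∑' b, |u b - v b|) :=
    (hu.summable.sub hv.summable).abs.hasSum.mul_left |p|
  have hscaled : HasSum (fun b => |p * u b - q * v b|) (∑' b, |p * u b - q * v b|) :=
    ((hu.summable.mul_left p).sub (hv.summable.mul_left q)).abs.hasSum
  have hm : 0 ≤ m := hv.nonneg hv0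
  calc |p| * ∑' b, |u b - v b|
      ≤ ∑' b, |p * u b - q * v b| + |p - q| * m :=
        hasSum_le hsplit hdiff (hscaled.add (hv.mul_left |p - q|))
    _ = ∑' b, |p * u b - q * v b| + |(p - q) * m| := by rw [abs_mul, abs_of_nonneg hm]
    _ ≤ 2 * ∑' b, |p * u b - q * v b| := by
        linarith [abs_sub_mul_le_tsum_abs_mul_sub_mul hu hv p q]

end ScaledL1

theorem exists_le_of_hasSum_of_mul_le {A : Type*} {w f g : A → ℝ} {c : ℝ} (hw : ∀ a, 0 ≤ w a)
    (hw1 : HasSum w 1) (hfg : ∀ a, w a * f a ≤ g a) (hg : HasSum g c) : ∃ a, f a ≤ c := by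
  by_contra! hlt
  obtain ⟨a₀, ha₀⟩ : ∃ a, w a ≠ 0 := by
    by_contra! hzero
    obtain rfl : w = 0 := funext hzero
    exact one_ne_zero (hw1.unique hasSum_zero)
  have hle (a : A) : w a * c ≤ g a :=
    (mul_le_mul_of_nonneg_left (hlt a).le (hw a)).trans (hfg a)
  have hlt₀ : w a₀ * c < g a₀ :=
    (mul_lt_mul_of_pos_left (hlt a₀) ((hw a₀).lt_of_ne' ha₀)).trans_le (hfg a₀)
  have : 1 * c < c := hasSum_lt hle hlt₀ (hw1.mul_right c) hg
  linarith

theorem exists_conditional_L1_le_general {A B : Type*} {PA : A → ℝ}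
    (hPA : ∀ a, 0 ≤ PA a) (hPAsum : HasSum PA 1) (PA' : A → ℝ)
    {k k' : A → B → ℝ} {m : A → ℝ} (hksum : ∀ a, HasSum (k a) (m a))
    (hk' : ∀ a b, 0 ≤ k' a b) (hk'sum : ∀ a, HasSum (k' a) (m a)) {ε : ℝ}
    (hε : HasSum (fun a => ∑' b, |PA a * k a b - PA' a * k' a b|) ε) :
    ∃ a, ∑' b, |k a b - k' a b| ≤ 2 * ε := by
  refine exists_le_of_hasSum_of_mul_le hPA hPAsum (fun a => ?_) (hε.mul_left 2)
  simpa only [abs_of_nonneg (hPA a)] using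
    abs_mul_tsum_abs_sub_le (hksum a) (hk'sum a) (hk' a) (PA a) (PA' a)

/-- If two joint distributions `P_A(a) k(b|a)` and `P'_A(a) k'(b|a)`
are at L1 distance `ε`, then there is an `a` for which the channel outputs are
at L1 distance at most `2ε`. -/
theorem exists_conditional_L1_le {A B : Type*} [Fintype A] [Fintype B]
    (PA PA' : A → ℝ)
    (hPA : ∀ a, 0 ≤ PA a) (hPAsum : ∑ a : A, PA a = 1)
    (hPA' : ∀ a, 0 ≤ PA' a) (hPA'sum : ∑ a : A, PA' a = 1)
    (k k' : A → B → ℝ)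
    (hk : ∀ a b, 0 ≤ k a b) (hksum : ∀ a, ∑ b : B, k a b = 1)
    (hk' : ∀ a b, 0 ≤ k' a b) (hk'sum : ∀ a, ∑ b : B, k' a b = 1)
    (ε : ℝ)
    (hε : ∑ a : A, ∑ b : B, |PA a * k a b - PA' a * k' a b| = ε) :
    ∃ a : A, ∑ b : B, |k a b - k' a b| ≤ 2 * ε := by
  have hε' : HasSum (fun a => ∑' b, |PA a * k a b - PA' a * k' a b|) ε := by
    simpa only [tsum_fintype, ← hε] using hasSum_fintype _
  simpa only [tsum_fintype] using exists_conditional_L1_le_general hPA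
    (hPAsum ▸ hasSum_fintype PA) PA' (fun a => hksum a ▸ hasSum_fintype (k a)) hk'
    (fun a => hk'sum a ▸ hasSum_fintype (k' a)) hε'
end

section
/- Error bound for the mismatch stochastic likelihood coder: Let A and B be finite sets, let P_{AB} be a pmf on A × B, let T_{A|B} be a channel from B to A (a pmf T_{A|B}(·|b) on A for each b ∈ B) such that T_{A|B}(a|b) > 0 whenever P_{AB}(a,b) > 0, let N ≥ 1, and let γ > 0. For a function φ : A → {1,…,N}, the mismatch stochastic likelihood coder is the channel T̂^φ(â | b, k) := T_{A|B}(â|b)·1{φ(â)=k} / Σ_{ā∈A} T_{A|B}(ā|b)·1{φ(ā)=k} (defined whenever the denominator is positive). Consider the experiment: (A,B) ~ P_{AB}, K := φ(A), and Â drawn according to T̂^φ(· | B, K); the error probability is P^φ[Â ≠ A]. Define S_γ := {(a,b) ∈ A × B : log₂ N − log₂(1/T_{A|B}(a|b)) > γ}. Then the expectation, over φ chosen uniformly at random among all functions A → {1,…,N}, of the error probability P^φ[Â ≠ A] is at most P_{AB}(S_γ^c) + 2^{−γ}. -/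
/-!
Fix a pair `(a, b)` and write `t = T(· | b)`. The decoder errs with probability
`R / (t a + R) ≤ R / t a`, where `R` is the likelihood of the other letters sharing the bin of `a`.
Under a uniformly random binning each of them does so with probability `1 / N`, so the expected
error is at most `1 / (N * t a)`, which is less than `2 ^ (-γ)` precisely when `(a, b)` lies in
`S_γ`. Off `S_γ` the error is bounded by `1`.
-/

open scoped BigOperators

/-- The mismatch stochastic likelihood coder `T̂^φ(a | b, k)` for the binning `φ`, as a function of
the row `t = T(· | b)` of the channel. It is `0` for every `a` when the bin `k` has no mass. -/
def likelihoodCoder {A K 𝕜 : Type*} [Fintype A] [DecidableEq K] [Semifield 𝕜]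
    (t : A → 𝕜) (φ : A → K) (k : K) (a : A) : 𝕜 :=
  (if φ a = k then t a else 0) / ∑ a', if φ a' = k then t a' else 0

section Collision

variable {A K 𝕜 : Type*} [Fintype A] [DecidableEq A] [Fintype K] [DecidableEq K]
  [Semifield 𝕜] [CharZero 𝕜]

theorem expect_ite_apply_eq_apply {a a' : A} (h : a ≠ a') :
    𝔼 φ : A → K, (if φ a' = φ a then (1 : 𝕜) else 0) = (Fintype.card K : 𝕜)⁻¹ := by
  rcases isEmpty_or_nonempty K with hK | hK
  · have : Nonempty A := ⟨a⟩
    simp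
  calc 𝔼 φ : A → K, (if φ a' = φ a then (1 : 𝕜) else 0)
    _ = 𝔼 x : K × ({i // i ≠ a'} → K), if x.1 = x.2 ⟨a, h⟩ then 1 else 0 :=
        Fintype.expect_equiv (Equiv.funSplitAt a' K) _ _ fun _ ↦ rfl
    _ = 𝔼 ψ : {i // i ≠ a'} → K, 𝔼 k : K, if k = ψ ⟨a, h⟩ then 1 else 0 := by
        rw [← Finset.univ_product_univ, Finset.expect_product, Finset.expect_comm]
    _ = (Fintype.card K : 𝕜)⁻¹ := by simp

theorem expect_sum_ite_apply_eq_apply {s : Finset A} {a : A} (ha : a ∉ s) (t : A → 𝕜) :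
    𝔼 φ : A → K, ∑ a' ∈ s, (if φ a' = φ a then t a' else 0)
      = (∑ a' ∈ s, t a') / Fintype.card K := by
  rw [Finset.expect_sum_comm, Finset.sum_div]
  refine Finset.sum_congr rfl fun a' ha' ↦ ?_
  have hne : a ≠ a' := fun h ↦ ha (h ▸ ha')
  rw [div_eq_mul_inv, ← expect_ite_apply_eq_apply (K := K) hne, Finset.mul_expect]
  simp only [mul_boole]

end Collision

section LikelihoodCoder

variable {A K 𝕜 : Type*} [Fintype A] [DecidableEq K] [Field 𝕜] [LinearOrder 𝕜]
  [IsStrictOrderedRing 𝕜] {t : A → 𝕜}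

theorem likelihoodCoder_nonneg (ht : 0 ≤ t) (φ : A → K) (k : K) (a : A) :
    0 ≤ likelihoodCoder t φ k a := by
  have hbin : ∀ a', 0 ≤ if φ a' = k then t a' else 0 := fun a' ↦ ite_nonneg (ht a') le_rfl
  exact div_nonneg (hbin a) (Finset.sum_nonneg fun a' _ ↦ hbin a')

variable [DecidableEq A] {a : A}

theorem one_sub_likelihoodCoder_self_le (ht : 0 ≤ t) (ha : 0 < t a) (φ : A → K) :
    1 - likelihoodCoder t φ (φ a) a
      ≤ (∑ a' ∈ Finset.univ.erase a, if φ a' = φ a then t a' else 0) / t a := by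
  set R := ∑ a' ∈ Finset.univ.erase a, if φ a' = φ a then t a' else 0
  have hR₀ : 0 ≤ R := Finset.sum_nonneg fun a' _ ↦ ite_nonneg (ht a') le_rfl
  have hbin : (∑ a', if φ a' = φ a then t a' else 0) = t a + R := by
    rw [← Finset.add_sum_erase _ _ (Finset.mem_univ a), if_pos rfl]
  calc 1 - likelihoodCoder t φ (φ a) a
    _ = R / (t a + R) := by
        rw [likelihoodCoder, if_pos rfl, hbin, one_sub_div (by positivity), add_sub_cancel_left]
    _ ≤ R / t a := by gcongr; exact le_add_of_nonneg_right hR₀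

variable [Fintype K]

theorem expect_one_sub_likelihoodCoder_self_le_one (ht : 0 ≤ t) (a : A) :
    𝔼 φ : A → K, (1 - likelihoodCoder t φ (φ a) a) ≤ 1 := by
  rcases isEmpty_or_nonempty (A → K) with h | h
  · simp
  exact Finset.expect_le Finset.univ_nonempty fun φ _ ↦
    sub_le_self _ (likelihoodCoder_nonneg ht φ _ a)

theorem expect_one_sub_likelihoodCoder_self_le (ht : 0 ≤ t) (ha : 0 < t a) :
    𝔼 φ : A → K, (1 - likelihoodCoder t φ (φ a) a)
      ≤ (∑ a', t a') / (Fintype.card K * t a) := by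
  calc 𝔼 φ : A → K, (1 - likelihoodCoder t φ (φ a) a)
    _ ≤ 𝔼 φ : A → K, (∑ a' ∈ Finset.univ.erase a, if φ a' = φ a then t a' else 0) / t a :=
        Finset.expect_le_expect fun φ _ ↦ one_sub_likelihoodCoder_self_le ht ha φ
    _ = (∑ a' ∈ Finset.univ.erase a, t a') / (Fintype.card K * t a) := by
        rw [← Finset.expect_div, expect_sum_ite_apply_eq_apply (Finset.notMem_erase a _),
          div_div]
    _ ≤ (∑ a', t a') / (Fintype.card K * t a) := by
        gcongr
        · exact fun a' _ _ ↦ ht a'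
        · exact Finset.erase_subset a _

end LikelihoodCoder

theorem lt_logb_sub_logb_one_div_iff {b x y γ : ℝ} (hb : 1 < b) (hx : 0 < x) (hy : 0 < y) :
    γ < Real.logb b x - Real.logb b (1 / y) ↔ b ^ γ < x * y := by
  rw [one_div, Real.logb_inv, sub_neg_eq_add, ← Real.logb_mul hx.ne' hy.ne',
    Real.lt_logb_iff_rpow_lt hb (mul_pos hx hy)]

theorem sum_mul_le_sum_filter_not_add {ι R : Type*} [CommSemiring R] [PartialOrder R]
    [IsOrderedRing R] {s : Finset ι} {w f : ι → R} {c : R}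
    (p : ι → Prop) [DecidablePred p] (hw : ∀ i ∈ s, 0 ≤ w i) (hc : 0 ≤ c)
    (hf : ∀ i ∈ s, f i ≤ 1) (hfp : ∀ i ∈ s, 0 < w i → p i → f i ≤ c) :
    ∑ i ∈ s, w i * f i ≤ ∑ i ∈ s with ¬p i, w i + (∑ i ∈ s, w i) * c := by
  rw [Finset.sum_filter, Finset.sum_mul, ← Finset.sum_add_distrib]
  refine Finset.sum_le_sum fun i hi ↦ ?_
  rcases (hw i hi).eq_or_lt with hwi | hwi
  · simp [← hwi]
  by_cases hpi : p i
  · simpa [hpi] using mul_le_mul_of_nonneg_left (hfp i hi hwi hpi) hwi.le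
  · rw [if_pos hpi]
    exact (mul_le_of_le_one_right hwi.le (hf i hi)).trans
      (le_add_of_nonneg_right (mul_nonneg hwi.le hc))

/-- Error bound for the mismatch stochastic likelihood coder
(Yassaee–Aref–Gohari). The expected error probability of the mismatch SLC,
over a uniformly random binning `φ : A → Fin N`, is at most
`P_{AB}(S_γᶜ) + 2^{-γ}`. -/
theorem mismatch_SLC_error_bound
    {A B : Type*} [Fintype A] [Fintype B] [DecidableEq A]
    (P : A × B → ℝ)
    (hP : ∀ x, 0 ≤ P x) (hPsum : ∑ x : A × B, P x = 1)
    (T : B → A → ℝ)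
    (hT : ∀ b a, 0 ≤ T b a) (hTsum : ∀ b, ∑ a : A, T b a = 1)
    (hTpos : ∀ a b, 0 < P (a, b) → 0 < T b a)
    (N : ℕ) (hN : 1 ≤ N)
    (γ : ℝ) (hγ : 0 < γ) :
    (Fintype.card (A → Fin N) : ℝ)⁻¹ *
        ∑ φ : A → Fin N, ∑ a : A, ∑ b : B,
          P (a, b) * (1 - T b a / ∑ a' : A, if φ a' = φ a then T b a' else 0)
      ≤ (∑ x ∈ Finset.univ.filter (fun x : A × B =>
            ¬(Real.logb 2 N - Real.logb 2 (1 / T x.2 x.1) > γ)), P x)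
        + (2 : ℝ) ^ (-γ) := by
  have hgood : ∀ x : A × B, 0 < P x → Real.logb 2 N - Real.logb 2 (1 / T x.2 x.1) > γ →
      𝔼 φ : A → Fin N, (1 - likelihoodCoder (T x.2) φ (φ x.1) x.1) ≤ (2 : ℝ) ^ (-γ) := by
    intro x hx hlog
    have hTx : 0 < T x.2 x.1 := hTpos x.1 x.2 hx
    have hlt := (lt_logb_sub_logb_one_div_iff one_lt_two (by positivity) hTx).1 hlog
    calc _ ≤ 1 / (N * T x.2 x.1) := by
          simpa [hTsum] using expect_one_sub_likelihoodCoder_self_le (K := Fin N) (hT x.2) hTx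
      _ ≤ 1 / 2 ^ γ := by gcongr
      _ = 2 ^ (-γ) := by rw [Real.rpow_neg two_pos.le, one_div]
  calc _ = ∑ x : A × B,
        P x * 𝔼 φ : A → Fin N, (1 - likelihoodCoder (T x.2) φ (φ x.1) x.1) := by
        simp_rw [Finset.mul_expect, ← Finset.expect_sum_comm, Fintype.expect_eq_sum_div_card,
          Fintype.sum_prod_type, likelihoodCoder, if_true, inv_mul_eq_div]
    _ ≤ _ := by
        simpa only [hPsum, one_mul] using
          sum_mul_le_sum_filter_not_add (s := Finset.univ) _ (fun x _ ↦ hP x) (by positivity)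
            (fun x _ ↦ expect_one_sub_likelihoodCoder_self_le_one (hT x.2) x.1)
            (fun x _ ↦ hgood x)
end

section
/- Derandomization of the extra common randomness: Let F and S be finite sets, let P and P' be pmfs on F × S, let Q_F denote the uniform pmf on F, and let R be a pmf on S. Suppose ‖P − Q_F ⊗ R‖₁ ≤ δ₁ and ‖P − P'‖₁ ≤ δ₂, where (Q_F ⊗ R)(f, s) := (1/|F|)·R(s). Then ‖Q_F ⊗ R − P'‖₁ ≤ δ₁ + δ₂, and there exists f ∈ F such that the marginal P'_F(f) := Σ_{s} P'(f, s) is positive and the conditional pmf P'_{S|F=f}(s) := P'(f, s)/P'_F(f) satisfies ‖R − P'_{S|F=f}‖₁ ≤ 2(δ₁ + δ₂). -/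
/-!
By the triangle inequality `Q ⊗ R` is within `δ₁ + δ₂` of `P'`. Write `m f` for the mass that `P'`
puts on the slice over `f`. Replacing the weight `Q f` by `m f` at most doubles the `L1` error of
that slice, because `|m f - Q f|` is itself at most this error. Hence `m f` times the conditional
error at `f` is at most twice the error of the slice, and averaging against `m` yields an `f` with
`0 < m f` whose conditional error is at most twice the total error.
-/

section LinearOrderedGroup

variable {ι G : Type*} [AddCommGroup G] [LinearOrder G] [IsOrderedAddMonoid G]

theorem sum_abs_sub_le (s : Finset ι) (a b c : ι → G) :
    ∑ i ∈ s, |a i - c i| ≤ ∑ i ∈ s, |a i - b i| + ∑ i ∈ s, |b i - c i| := by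
  rw [← Finset.sum_add_distrib]
  exact Finset.sum_le_sum fun i _ => abs_sub_le (a i) (b i) (c i)

end LinearOrderedGroup

section LinearOrderedRing

variable {ι A : Type*} [Ring A] [LinearOrder A] [IsStrictOrderedRing A]

theorem sum_abs_sum_mul_sub_le {s : Finset ι} {r : ι → A} (hr : ∀ i ∈ s, 0 ≤ r i)
    (hr_sum : ∑ i ∈ s, r i = 1) (p : ι → A) (c : A) :
    ∑ i ∈ s, |(∑ j ∈ s, p j) * r i - p i| ≤ 2 * ∑ i ∈ s, |c * r i - p i| := by
  set m := ∑ j ∈ s, p j with hm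
  have mass_error : |m - c| ≤ ∑ i ∈ s, |c * r i - p i| :=
    calc |m - c| = |∑ i ∈ s, (c * r i - p i)| := by
          rw [Finset.sum_sub_distrib, ← Finset.mul_sum, hr_sum, mul_one, ← hm, abs_sub_comm]
      _ ≤ ∑ i ∈ s, |c * r i - p i| := Finset.abs_sum_le_sum_abs _ _
  have rescaling_error : ∑ i ∈ s, |m * r i - c * r i| = |m - c| :=
    calc ∑ i ∈ s, |m * r i - c * r i| = ∑ i ∈ s, |m - c| * r i :=
          Finset.sum_congr rfl fun i hi => by rw [← sub_mul, abs_mul, abs_of_nonneg (hr i hi)]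
      _ = |m - c| := by rw [← Finset.mul_sum, hr_sum, mul_one]
  calc ∑ i ∈ s, |m * r i - p i|
      ≤ ∑ i ∈ s, |m * r i - c * r i| + ∑ i ∈ s, |c * r i - p i| := sum_abs_sub_le s _ _ _
    _ ≤ 2 * ∑ i ∈ s, |c * r i - p i| := by
      rw [rescaling_error, two_mul]
      gcongr

end LinearOrderedRing

section LinearOrderedField

variable {ι F S 𝕜 : Type*} [Field 𝕜] [LinearOrder 𝕜] [IsStrictOrderedRing 𝕜]

theorem sum_abs_sub_div_sum_le {s : Finset ι} {r : ι → 𝕜} (hr : ∀ i ∈ s, 0 ≤ r i)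
    (hr_sum : ∑ i ∈ s, r i = 1) {p : ι → 𝕜} (hp : 0 < ∑ i ∈ s, p i) (c : 𝕜) :
    ∑ i ∈ s, |r i - p i / ∑ j ∈ s, p j| ≤ 2 * (∑ i ∈ s, |c * r i - p i|) / ∑ i ∈ s, p i := by
  rw [le_div_iff₀ hp, Finset.sum_mul]
  calc ∑ i ∈ s, |r i - p i / ∑ j ∈ s, p j| * ∑ j ∈ s, p j
      = ∑ i ∈ s, |(∑ j ∈ s, p j) * r i - p i| := Finset.sum_congr rfl fun i _ => by
        rw [← abs_of_pos hp, ← abs_mul, abs_of_pos hp, sub_mul, div_mul_cancel₀ _ hp.ne', mul_comm]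
    _ ≤ 2 * ∑ i ∈ s, |c * r i - p i| := sum_abs_sum_mul_sub_le hr hr_sum p c

theorem exists_pos_and_div_le_sum_div_sum {s : Finset ι} {w a : ι → 𝕜}
    (hw : 0 < ∑ i ∈ s, w i) (ha : ∀ i ∈ s, 0 ≤ a i) :
    ∃ i ∈ s, 0 < w i ∧ a i / w i ≤ (∑ j ∈ s, a j) / ∑ j ∈ s, w j := by
  by_contra! h_gt
  set ρ := (∑ j ∈ s, a j) / ∑ j ∈ s, w j with hρ
  have hρ_nonneg : 0 ≤ ρ := div_nonneg (Finset.sum_nonneg ha) hw.le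
  have lt_of_pos : ∀ i ∈ s, 0 < w i → ρ * w i < a i := fun i hi hwi =>
    (lt_div_iff₀ hwi).mp (h_gt i hi hwi)
  have le_of_mem : ∀ i ∈ s, ρ * w i ≤ a i := fun i hi =>
    (lt_or_ge 0 (w i)).elim (fun hwi => (lt_of_pos i hi hwi).le)
      fun hwi => (mul_nonpos_of_nonneg_of_nonpos hρ_nonneg hwi).trans (ha i hi)
  obtain ⟨i, hi, hwi⟩ : ∃ i ∈ s, 0 < w i := Finset.exists_lt_of_sum_lt (by simpa using hw)
  have sum_lt : ∑ i ∈ s, ρ * w i < ∑ i ∈ s, a i :=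
    Finset.sum_lt_sum le_of_mem ⟨i, hi, lt_of_pos i hi hwi⟩
  rw [← Finset.mul_sum, hρ, div_mul_cancel₀ _ hw.ne'] at sum_lt
  exact sum_lt.false

variable [Fintype F] [Fintype S]

theorem exists_sum_abs_sub_conditional_le (Q : F → 𝕜) {R : S → 𝕜} (hR : ∀ s, 0 ≤ R s)
    (hRsum : ∑ s, R s = 1) {P : F × S → 𝕜} (hP : 0 < ∑ x, P x) :
    ∃ f : F, 0 < ∑ s, P (f, s) ∧
      ∑ s, |R s - P (f, s) / ∑ s', P (f, s')| ≤ 2 * (∑ x, |Q x.1 * R x.2 - P x|) / ∑ x, P x := by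
  rw [Fintype.sum_prod_type] at hP
  obtain ⟨f, -, hf, hf_le⟩ := exists_pos_and_div_le_sum_div_sum
    (a := fun f => 2 * ∑ s, |Q f * R s - P (f, s)|) hP fun f _ => by positivity
  refine ⟨f, hf, (sum_abs_sub_div_sum_le (fun s _ => hR s) hRsum hf (Q f)).trans ?_⟩
  rwa [← Finset.mul_sum, ← Fintype.sum_prod_type', ← Fintype.sum_prod_type'] at hf_le

theorem derandomization_of_common_randomness_general
    (P P' : F × S → 𝕜) (hP'sum : ∑ x, P' x = 1)
    (Q : F → 𝕜) (R : S → 𝕜) (hR : ∀ s, 0 ≤ R s) (hRsum : ∑ s, R s = 1)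
    (δ₁ δ₂ : 𝕜)
    (h1 : ∑ x, |P x - Q x.1 * R x.2| ≤ δ₁)
    (h2 : ∑ x, |P x - P' x| ≤ δ₂) :
    (∑ x, |Q x.1 * R x.2 - P' x| ≤ δ₁ + δ₂)
    ∧ ∃ f : F, 0 < (∑ s, P' (f, s)) ∧
        ∑ s, |R s - P' (f, s) / ∑ s', P' (f, s')| ≤ 2 * (δ₁ + δ₂) := by
  have product_close : ∑ x, |Q x.1 * R x.2 - P' x| ≤ δ₁ + δ₂ := by
    refine (sum_abs_sub_le _ _ P _).trans (add_le_add ?_ h2)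
    simpa only [abs_sub_comm] using h1
  obtain ⟨f, hf, hf_le⟩ := exists_sum_abs_sub_conditional_le Q hR hRsum (hP'sum ▸ one_pos)
  rw [hP'sum, div_one] at hf_le
  exact ⟨product_close, f, hf, hf_le.trans (by gcongr)⟩

end LinearOrderedField

/-- Derandomization of the extra common randomness: if `P` is
`δ₁`-close to `Q_F ⊗ R` (uniform on `F` times `R`) and `δ₂`-close to `P'`,
then `Q_F ⊗ R` is `(δ₁+δ₂)`-close to `P'` and there is an instance `f ∈ F`
with positive marginal such that the conditional `P'_{S|F=f}` is
`2(δ₁+δ₂)`-close to `R`. -/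
theorem derandomization_of_common_randomness
    {F S : Type*} [Fintype F] [Fintype S] [Nonempty F]
    (P P' : F × S → ℝ)
    (hP : ∀ x, 0 ≤ P x) (hPsum : ∑ x : F × S, P x = 1)
    (hP' : ∀ x, 0 ≤ P' x) (hP'sum : ∑ x : F × S, P' x = 1)
    (R : S → ℝ) (hR : ∀ s, 0 ≤ R s) (hRsum : ∑ s : S, R s = 1)
    (δ₁ δ₂ : ℝ)
    (h1 : ∑ x : F × S, |P x - (Fintype.card F : ℝ)⁻¹ * R x.2| ≤ δ₁)
    (h2 : ∑ x : F × S, |P x - P' x| ≤ δ₂) :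
    (∑ x : F × S, |(Fintype.card F : ℝ)⁻¹ * R x.2 - P' x| ≤ δ₁ + δ₂)
    ∧ ∃ f : F, 0 < (∑ s : S, P' (f, s)) ∧
        ∑ s : S, |R s - P' (f, s) / ∑ s' : S, P' (f, s')| ≤ 2 * (δ₁ + δ₂) :=
  derandomization_of_common_randomness_general P P' hP'sum
    (fun _ => (Fintype.card F : ℝ)⁻¹) R hR hRsum δ₁ δ₂ h1 h2
end
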